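/- arXiv:1910.04401 — 2 statements merged into one kernel-verified Lean document; each statement's English description precedes it below -/
import Mathlib

section
/- Let μ and μ' be stable matchings of the same matching market, let m be a man and w a woman with μ(m) = w and μ'(m) ≠ w. Then μ'(m) ≻_m w if and only if μ'(w) ≺_w m. -/
/-- A matching market: men `M` and women `W`; each man has a strict preference
order over `W ∪ {∅}` and each woman over `M ∪ {∅}`, encoded by injective rank
functions (a strictly higher rank means strictly more preferred); `none`
plays the role of `∅` (being unmatched), and partners ranked below `none`
are unacceptable. -/
structure Market (M W : Type*) where
  mRank : M → Option W → ℕ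
  wRank : W → Option M → ℕ
  mRank_inj : ∀ m, Function.Injective (mRank m)
  wRank_inj : ∀ w, Function.Injective (wRank w)

/-- A matching: `mu` assigns each man a woman or `none`, `nu` assigns each
woman a man or `none`, and `μ(m) = w ↔ μ(w) = m`. -/
structure Matching (M W : Type*) where
  mu : M → Option W
  nu : W → Option M
  consistent : ∀ m w, mu m = some w ↔ nu w = some m

variable {M W : Type*}

/-- Every matched agent prefers their partner to `∅`. -/
def Market.IndivRational (mkt : Market M W) (μ : Matching M W) : Prop :=
  (∀ m w, μ.mu m = some w → mkt.mRank m none < mkt.mRank m (some w)) ∧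
  (∀ w m, μ.nu w = some m → mkt.wRank w none < mkt.wRank w (some m))

/-- `(m, w)` is a blocking pair for `μ`: they are not matched to each other,
`w ≻_m μ(m)` and `m ≻_w μ(w)`. -/
def Market.Blocking (mkt : Market M W) (μ : Matching M W) (m : M) (w : W) : Prop :=
  μ.mu m ≠ some w ∧
  mkt.mRank m (μ.mu m) < mkt.mRank m (some w) ∧
  mkt.wRank w (μ.nu w) < mkt.wRank w (some m)

/-- A matching is stable if it is individually rational and has no blocking pair. -/
def Market.Stable (mkt : Market M W) (μ : Matching M W) : Prop :=
  mkt.IndivRational μ ∧ ∀ m w, ¬ mkt.Blocking μ m w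

/-- Woman-dominance: `μ ≥ μ'` iff every woman weakly prefers her partner in `μ`. -/
def Market.Dom (mkt : Market M W) (μ μ' : Matching M W) : Prop :=
  ∀ w, mkt.wRank w (μ'.nu w) ≤ mkt.wRank w (μ.nu w)

/-- Strict woman-dominance: `μ > μ'`. -/
def Market.StrictDom (mkt : Market M W) (μ μ' : Matching M W) : Prop :=
  mkt.Dom μ μ' ∧ μ ≠ μ'

/-- `μ'` covers `μ` in the woman-dominance order on stable matchings. -/
def Market.Covers (mkt : Market M W) (μ' μ : Matching M W) : Prop :=
  mkt.StrictDom μ' μ ∧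
  ¬ ∃ μ'' : Matching M W, mkt.Stable μ'' ∧ mkt.StrictDom μ' μ'' ∧ mkt.StrictDom μ'' μ

/-- `μ'` is the elimination of the list `ρ = [(w_0,m_0),…,(w_{k-1},m_{k-1})]`
from `μ`: `k ≥ 2`, the women (resp. men) in `ρ` are distinct, `μ(w_i) = m_i`,
`μ'(m_i) = w_{(i+1) mod k}`, and every agent not appearing in `ρ` has the same
partner in `μ` and `μ'`. -/
def Matching.IsElimOf (μ' μ : Matching M W) (ρ : List (W × M)) : Prop :=
  2 ≤ ρ.length ∧
  (ρ.map Prod.fst).Nodup ∧ (ρ.map Prod.snd).Nodup ∧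
  (∀ i : Fin ρ.length, μ.nu (ρ.get i).1 = some (ρ.get i).2) ∧
  (∀ i : Fin ρ.length, μ'.mu (ρ.get i).2 =
    some (ρ.get ⟨(i.1 + 1) % ρ.length,
      Nat.mod_lt _ (Nat.lt_of_le_of_lt (Nat.zero_le _) i.isLt)⟩).1) ∧
  (∀ m : M, m ∉ ρ.map Prod.snd → μ'.mu m = μ.mu m) ∧
  (∀ w : W, w ∉ ρ.map Prod.fst → μ'.nu w = μ.nu w)

/-- `ρ` is a rotation exposed in `μ`: the elimination of `ρ` from `μ` is a
stable matching which covers `μ`. -/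
def Market.ExposedRotation (mkt : Market M W) (μ : Matching M W) (ρ : List (W × M)) : Prop :=
  ∃ μ' : Matching M W, Matching.IsElimOf μ' μ ρ ∧ mkt.Stable μ' ∧ mkt.Covers μ' μ

/-- `ρ` belongs to the set `Π` of all rotations, i.e. it is exposed in some
stable matching. -/
def Market.InPi (mkt : Market M W) (ρ : List (W × M)) : Prop :=
  ∃ μ : Matching M W, mkt.Stable μ ∧ mkt.ExposedRotation μ ρ

/-- The cyclically next index in a rotation. -/
def RotNext (ρ : List (W × M)) (i : Fin ρ.length) : Fin ρ.length :=
  ⟨(i.1 + 1) % ρ.length, Nat.mod_lt _ (Nat.lt_of_le_of_lt (Nat.zero_le _) i.isLt)⟩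

/-- The cyclically previous index in a rotation. -/
def RotPrev (ρ : List (W × M)) (i : Fin ρ.length) : Fin ρ.length :=
  ⟨(i.1 + ρ.length - 1) % ρ.length, Nat.mod_lt _ (Nat.lt_of_le_of_lt (Nat.zero_le _) i.isLt)⟩

/-- `ρ` moves man `m` from `w` to `w'` (i.e. `m = m_i`, `w = w_i`, `w' = w_{i+1}`). -/
def MovesManFromTo (ρ : List (W × M)) (m : M) (w w' : W) : Prop :=
  ∃ i : Fin ρ.length, (ρ.get i).2 = m ∧ (ρ.get i).1 = w ∧ (ρ.get (RotNext ρ i)).1 = w'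

/-- `ρ` moves woman `w` from `m` to `m'` (i.e. `w = w_i`, `m = m_i`, `m' = m_{i-1}`). -/
def MovesWomanFromTo (ρ : List (W × M)) (w : W) (m m' : M) : Prop :=
  ∃ i : Fin ρ.length, (ρ.get i).1 = w ∧ (ρ.get i).2 = m ∧ (ρ.get (RotPrev ρ i)).2 = m'

/-- `ρ1` is a type 1 predecessor of `ρ2`: `ρ1` moves some man `m` to a woman
`w` and the pair `(w, m)` appears in `ρ2`. -/
def Market.Type1Pred (_mkt : Market M W) (ρ1 ρ2 : List (W × M)) : Prop :=
  ∃ (w : W) (m : M), (∃ w0 : W, MovesManFromTo ρ1 m w0 w) ∧ (w, m) ∈ ρ2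

/-- `ρ1` is a type 2 predecessor of `ρ2`: `ρ1` moves some woman `w` from a man
strictly below `m` to a man strictly above `m`, and `ρ2` moves `m` from a woman
strictly above `w` to a woman strictly below `w`. -/
def Market.Type2Pred (mkt : Market M W) (ρ1 ρ2 : List (W × M)) : Prop :=
  ∃ (m : M) (w : W) (mlo mhi : M) (whi wlo : W),
    MovesWomanFromTo ρ1 w mlo mhi ∧
    mkt.wRank w (some mlo) < mkt.wRank w (some m) ∧
    mkt.wRank w (some m) < mkt.wRank w (some mhi) ∧
    MovesManFromTo ρ2 m whi wlo ∧
    mkt.mRank m (some wlo) < mkt.mRank m (some w) ∧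
    mkt.mRank m (some w) < mkt.mRank m (some whi)

/-- `ρ1` is a (type 1 or type 2) predecessor of `ρ2`; these are the edges of
the predecessor graph `G(Π)`. -/
def Market.Pred (mkt : Market M W) (ρ1 ρ2 : List (W × M)) : Prop :=
  mkt.Type1Pred ρ1 ρ2 ∨ mkt.Type2Pred ρ1 ρ2

/-- `σ` assigns each woman the more preferred of her partners in `μ` and `μ'`. -/
def Market.IsJoin (mkt : Market M W) (μ μ' σ : Matching M W) : Prop :=
  ∀ w, σ.nu w = if mkt.wRank w (μ'.nu w) ≤ mkt.wRank w (μ.nu w) then μ.nu w else μ'.nu w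

/-- `σ` assigns each woman the less preferred of her partners in `μ` and `μ'`. -/
def Market.IsMeet (mkt : Market M W) (μ μ' σ : Matching M W) : Prop :=
  ∀ w, σ.nu w = if mkt.wRank w (μ.nu w) ≤ mkt.wRank w (μ'.nu w) then μ.nu w else μ'.nu w

/-!
Let `A` be the set of men who are better off in `μ'` than in `μ`, and `B` the set of women who are
better off in `μ` than in `μ'`. Since `μ` has no blocking pair, `μ'` maps `A` injectively into `B`;
since `μ'` has none, `μ` maps `B` injectively into `A`. So if `A` is finite, `μ` maps `B` onto `A`:
every man who is better off in `μ'` leaves behind a woman who is better off in `μ`. The converse,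
that his partner in `μ` is better off in `μ` only if he is better off in `μ'`, says that the two do
not block `μ'`.
-/

/-- The same matching with the roles of men and women exchanged. -/
def Matching.swap (μ : Matching M W) : Matching W M where
  mu := μ.nu
  nu := μ.mu
  consistent w m := (μ.consistent m w).symm

/-- The same market with the roles of men and women exchanged. A statement about women follows
from the one about men by applying it to the swapped market and matchings. -/
def Market.swap (mkt : Market M W) : Market W M where
  mRank := mkt.wRank
  wRank := mkt.mRank
  mRank_inj := mkt.wRank_inj
  wRank_inj := mkt.mRank_inj

/-- The men who strictly prefer their partner in `μ'` to their partner in `μ`. A man who is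
unmatched in one of the two matchings is compared through the rank of `none`. -/
def Market.menBetterOff (mkt : Market M W) (μ μ' : Matching M W) : Set M :=
  {m | mkt.mRank m (μ.mu m) < mkt.mRank m (μ'.mu m)}

/-- The women who strictly prefer their partner in `μ'` to their partner in `μ`; this is
`Market.menBetterOff` for the swapped market. -/
def Market.womenBetterOff (mkt : Market M W) (μ μ' : Matching M W) : Set W :=
  {w | mkt.wRank w (μ.nu w) < mkt.wRank w (μ'.nu w)}

section

variable {mkt : Market M W} {μ μ' : Matching M W} {m : M} {w : W}

theorem Matching.mu_injOn_isSome (μ : Matching M W) : Set.InjOn μ.mu {m | (μ.mu m).isSome} := by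
  intro m₁ hm₁ m₂ _ heq
  obtain ⟨w, hw⟩ := Option.isSome_iff_exists.mp hm₁
  have hw₁ : μ.nu w = some m₁ := (μ.consistent m₁ w).mp hw
  have hw₂ : μ.nu w = some m₂ := (μ.consistent m₂ w).mp (heq ▸ hw)
  exact Option.some.inj (hw₁.symm.trans hw₂)

namespace Market

theorem mem_menBetterOff :
    m ∈ mkt.menBetterOff μ μ' ↔ mkt.mRank m (μ.mu m) < mkt.mRank m (μ'.mu m) :=
  Iff.rfl

theorem mem_womenBetterOff :
    w ∈ mkt.womenBetterOff μ μ' ↔ mkt.wRank w (μ.nu w) < mkt.wRank w (μ'.nu w) :=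
  Iff.rfl

theorem Blocking.of_swap (hb : mkt.swap.Blocking μ.swap w m) : mkt.Blocking μ m w :=
  ⟨mt (μ.consistent m w).mp hb.1, hb.2.2, hb.2.1⟩

theorem Stable.swap (h : mkt.Stable μ) : mkt.swap.Stable μ.swap :=
  ⟨h.1.symm, fun w m hb => h.2 m w hb.of_swap⟩

theorem IndivRational.mRank_none_le (h : mkt.IndivRational μ) (m : M) :
    mkt.mRank m none ≤ mkt.mRank m (μ.mu m) := by
  cases hm : μ.mu m with
  | none => exact le_rfl
  | some w => exact (h.1 m w hm).le

theorem Stable.wRank_lt_of_mRank_lt (h : mkt.Stable μ)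
    (hm : mkt.mRank m (μ.mu m) < mkt.mRank m (some w)) :
    mkt.wRank w (some m) < mkt.wRank w (μ.nu w) := by
  have hmw : μ.mu m ≠ some w := fun heq => hm.ne (congrArg (mkt.mRank m) heq)
  have hle : mkt.wRank w (some m) ≤ mkt.wRank w (μ.nu w) :=
    not_lt.mp fun hw => h.2 m w ⟨hmw, hm, hw⟩
  have hne : some m ≠ μ.nu w := fun heq => hmw ((μ.consistent m w).mpr heq.symm)
  exact hle.lt_of_ne ((mkt.wRank_inj w).ne hne)

theorem Stable.mRank_lt_of_wRank_lt (h : mkt.Stable μ)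
    (hw : mkt.wRank w (μ.nu w) < mkt.wRank w (some m)) :
    mkt.mRank m (some w) < mkt.mRank m (μ.mu m) :=
  h.swap.wRank_lt_of_mRank_lt hw

theorem Stable.exists_mu_eq_some_of_mem_menBetterOff (h : mkt.Stable μ)
    (hm : m ∈ mkt.menBetterOff μ μ') : ∃ w ∈ mkt.womenBetterOff μ' μ, μ'.mu m = some w := by
  rw [mem_menBetterOff] at hm
  have hsome : μ'.mu m ≠ none := fun hnone => (h.1.mRank_none_le m).not_gt (hnone ▸ hm)
  obtain ⟨w, hw⟩ := Option.ne_none_iff_exists'.mp hsome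
  refine ⟨w, ?_, hw⟩
  rw [mem_womenBetterOff, (μ'.consistent m w).mp hw]
  exact h.wRank_lt_of_mRank_lt (hw ▸ hm)

theorem Stable.image_mu_menBetterOff_subset (h : mkt.Stable μ) :
    μ'.mu '' mkt.menBetterOff μ μ' ⊆ some '' mkt.womenBetterOff μ' μ := by
  rintro _ ⟨m, hm, rfl⟩
  obtain ⟨w, hwB, hw⟩ := h.exists_mu_eq_some_of_mem_menBetterOff hm
  exact ⟨w, hwB, hw.symm⟩

theorem Stable.injOn_mu_menBetterOff (h : mkt.Stable μ) :
    Set.InjOn μ'.mu (mkt.menBetterOff μ μ') :=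
  μ'.mu_injOn_isSome.mono fun _ hm =>
    let ⟨w, _, hw⟩ := h.exists_mu_eq_some_of_mem_menBetterOff hm
    Option.isSome_iff_exists.mpr ⟨w, hw⟩

theorem Stable.encard_menBetterOff_le (h : mkt.Stable μ) :
    (mkt.menBetterOff μ μ').encard ≤ (mkt.womenBetterOff μ' μ).encard :=
  calc (mkt.menBetterOff μ μ').encard
      = (μ'.mu '' mkt.menBetterOff μ μ').encard := h.injOn_mu_menBetterOff.encard_image.symm
    _ ≤ (some '' mkt.womenBetterOff μ' μ).encard :=
        Set.encard_le_encard h.image_mu_menBetterOff_subset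
    _ = (mkt.womenBetterOff μ' μ).encard := (Option.some_injective W).encard_image _

theorem Stable.image_nu_womenBetterOff_eq (h : mkt.Stable μ) (h' : mkt.Stable μ')
    (hfin : (mkt.menBetterOff μ μ').Finite) :
    μ.nu '' mkt.womenBetterOff μ' μ = some '' mkt.menBetterOff μ μ' := by
  have hsub : μ.nu '' mkt.womenBetterOff μ' μ ⊆ some '' mkt.menBetterOff μ μ' :=
    h'.swap.image_mu_menBetterOff_subset (μ' := μ.swap)
  have hinj : Set.InjOn μ.nu (mkt.womenBetterOff μ' μ) :=
    h'.swap.injOn_mu_menBetterOff (μ' := μ.swap)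
  refine (hfin.image some).eq_of_subset_of_encard_le' hsub ?_
  rw [(Option.some_injective M).encard_image, hinj.encard_image]
  exact h.encard_menBetterOff_le

end Market

theorem one_up_one_down_general (h : mkt.Stable μ) (h' : mkt.Stable μ')
    (hfin : (mkt.menBetterOff μ μ').Finite) (hmw : μ.mu m = some w) :
    mkt.mRank m (some w) < mkt.mRank m (μ'.mu m) ↔
      mkt.wRank w (μ'.nu w) < mkt.wRank w (some m) := by
  have hwm : μ.nu w = some m := (μ.consistent m w).mp hmw
  refine ⟨fun hm => ?_, h'.mRank_lt_of_wRank_lt⟩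
  have hmA : m ∈ mkt.menBetterOff μ μ' := by
    rwa [Market.mem_menBetterOff, hmw]
  obtain ⟨v, hvB, hvm⟩ : some m ∈ μ.nu '' mkt.womenBetterOff μ' μ :=
    h.image_nu_womenBetterOff_eq h' hfin ▸ Set.mem_image_of_mem some hmA
  obtain rfl : w = v :=
    Option.some.inj (hmw.symm.trans ((μ.consistent m v).mpr hvm))
  rwa [Market.mem_womenBetterOff, hwm] at hvB

end

/-- If `μ(m) = w` but `μ'(m) ≠ w` for stable `μ, μ'`, then
`μ'(m) ≻_m w ↔ μ'(w) ≺_w m`. -/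
theorem one_up_one_down {M W : Type*} [Fintype M] [Fintype W]
    (mkt : Market M W) (μ μ' : Matching M W)
    (h : mkt.Stable μ) (h' : mkt.Stable μ')
    (m : M) (w : W) (hmw : μ.mu m = some w) (hne : μ'.mu m ≠ some w) :
    mkt.mRank m (some w) < mkt.mRank m (μ'.mu m) ↔
      mkt.wRank w (μ'.nu w) < mkt.wRank w (some m) :=
  one_up_one_down_general h h' (Set.toFinite _) hmw
end

section
/- Let μ and μ' be stable matchings of the same matching market. Then the assignment μ∧μ' that gives each woman w the ≻_w-less-preferred of μ(w) and μ'(w) is a well-defined matching (in particular, each man receives under it the ≻_m-more-preferred of μ(m) and μ'(m)), and μ∧μ' is stable. -/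
variable {M W : Type*}

/-!
Give each man the better of his two partners and each woman the worse of hers. If `w` is the better
partner of `m`, then `m` weakly prefers `w` to what he gets in either matching, so stability of both
makes `w` weakly prefer both her partners to `m`, and `m` is her worse partner. Thus "better
partner" injects the men with a better partner into the women with a worse partner. In the other
direction, a woman whose worse partner exists is matched in `μ`, and her `μ`-partner has a better
partner; this is an injection too. By finiteness the first injection is onto, so the two
assignments are inverse to each other.
-/

theorem eq_some_iff_eq_some_of_injective {α β : Type*} {p : α → Option β} {q : β → Option α}
    (hfin : Finite α ∨ Finite β) (hpq : ∀ a b, p a = some b → q b = some a)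
    {e : {b // (q b).isSome} → {a // (p a).isSome}} (he : e.Injective) (a : α) (b : β) :
    p a = some b ↔ q b = some a := by
  refine ⟨hpq a b, fun hb => ?_⟩
  have : Finite {b // (q b).isSome} :=
    hfin.elim (fun _ => Finite.of_injective e he) (fun _ => inferInstance)
  have exists_image (x : {a // (p a).isSome}) : ∃ y : {b // (q b).isSome}, p x = some y.1 := by
    obtain ⟨b, hb⟩ := Option.isSome_iff_exists.1 x.2
    exact ⟨⟨b, Option.isSome_of_eq_some (hpq _ _ hb)⟩, hb⟩
  choose f hf using exists_image
  have f_injective : f.Injective := fun x y hxy =>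
    Subtype.ext <| Option.some_injective _ <|
      (hpq _ _ (hf x)).symm.trans (hxy ▸ hpq _ _ (hf y))
  have f_surjective : f.Surjective :=
    (Finite.surjective_of_injective (f_injective.comp he)).of_comp
  obtain ⟨x, hx⟩ := f_surjective ⟨b, Option.isSome_of_eq_some hb⟩
  have hxb : p x = some b := by rw [hf x, hx]
  have hxa : x.1 = a := Option.some_injective _ ((hpq _ _ hxb).symm.trans hb)
  exact hxa ▸ hxb

namespace Market

/-- The partner of `m` in `μ ∧ μ'`: the one he prefers among `μ(m)` and `μ'(m)`. -/
def betterWife (mkt : Market M W) (μ μ' : Matching M W) (m : M) : Option W :=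
  if mkt.mRank m (μ'.mu m) ≤ mkt.mRank m (μ.mu m) then μ.mu m else μ'.mu m

/-- The partner of `w` in `μ ∧ μ'`: the one she likes less among `μ(w)` and `μ'(w)`. -/
def worseHusband (mkt : Market M W) (μ μ' : Matching M W) (w : W) : Option M :=
  if mkt.wRank w (μ.nu w) ≤ mkt.wRank w (μ'.nu w) then μ.nu w else μ'.nu w

variable {mkt : Market M W} {μ μ' : Matching M W} {m : M} {w : W}

theorem betterWife_eq_or (mkt : Market M W) (μ μ' : Matching M W) (m : M) :
    mkt.betterWife μ μ' m = μ.mu m ∨ mkt.betterWife μ μ' m = μ'.mu m :=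
  ite_eq_or_eq _ _ _

theorem worseHusband_eq_or (mkt : Market M W) (μ μ' : Matching M W) (w : W) :
    mkt.worseHusband μ μ' w = μ.nu w ∨ mkt.worseHusband μ μ' w = μ'.nu w :=
  ite_eq_or_eq _ _ _

theorem mRank_betterWife (mkt : Market M W) (μ μ' : Matching M W) (m : M) :
    mkt.mRank m (mkt.betterWife μ μ' m) =
      max (mkt.mRank m (μ.mu m)) (mkt.mRank m (μ'.mu m)) := by
  rw [betterWife, apply_ite (mkt.mRank m), max_comm, max_def]

theorem wRank_worseHusband (mkt : Market M W) (μ μ' : Matching M W) (w : W) :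
    mkt.wRank w (mkt.worseHusband μ μ' w) =
      min (mkt.wRank w (μ.nu w)) (mkt.wRank w (μ'.nu w)) := by
  rw [worseHusband, apply_ite (mkt.wRank w), min_def]

theorem IndivRational.wRank_none_le (h : mkt.IndivRational μ) (w : W) :
    mkt.wRank w none ≤ mkt.wRank w (μ.nu w) := by
  cases hw : μ.nu w with
  | none => exact le_rfl
  | some m => exact (h.2 w m hw).le

theorem IndivRational.isSome_nu_of_isSome_worseHusband (h' : mkt.IndivRational μ')
    (hw : (mkt.worseHusband μ μ' w).isSome) : (μ.nu w).isSome := by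
  contrapose hw
  rw [Option.not_isSome_iff_eq_none] at hw ⊢
  apply mkt.wRank_inj w
  rw [wRank_worseHusband, hw, min_eq_left (h'.wRank_none_le w)]

theorem IndivRational.isSome_betterWife_of_mu_eq_some (h : mkt.IndivRational μ)
    (hm : μ.mu m = some w) : (mkt.betterWife μ μ' m).isSome := by
  have none_lt : mkt.mRank m none < mkt.mRank m (mkt.betterWife μ μ' m) := by
    rw [mRank_betterWife, hm]
    exact lt_max_of_lt_left (h.1 m w hm)
  rw [Option.isSome_iff_ne_none]
  exact fun hnone => none_lt.ne (congrArg (mkt.mRank m) hnone.symm)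

theorem Stable.wRank_some_le (h : mkt.Stable μ)
    (hm : mkt.mRank m (μ.mu m) ≤ mkt.mRank m (some w)) :
    mkt.wRank w (some m) ≤ mkt.wRank w (μ.nu w) := by
  by_cases hmw : μ.mu m = some w
  · rw [(μ.consistent m w).1 hmw]
  · have hlt := hm.lt_of_ne fun heq => hmw (mkt.mRank_inj m heq)
    exact not_lt.1 fun hw => h.2 m w ⟨hmw, hlt, hw⟩

theorem Stable.wRank_some_le_worseHusband (h : mkt.Stable μ) (h' : mkt.Stable μ')
    (hm : mkt.mRank m (mkt.betterWife μ μ' m) ≤ mkt.mRank m (some w)) :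
    mkt.wRank w (some m) ≤ mkt.wRank w (mkt.worseHusband μ μ' w) := by
  rw [mRank_betterWife, max_le_iff] at hm
  rw [wRank_worseHusband]
  exact le_min (h.wRank_some_le hm.1) (h'.wRank_some_le hm.2)

theorem Stable.worseHusband_eq_some_of_betterWife_eq_some (h : mkt.Stable μ) (h' : mkt.Stable μ')
    (hm : mkt.betterWife μ μ' m = some w) : mkt.worseHusband μ μ' w = some m := by
  refine mkt.wRank_inj w (le_antisymm ?_ (h.wRank_some_le_worseHusband h' (congrArg _ hm).le))
  rw [wRank_worseHusband]
  rcases mkt.betterWife_eq_or μ μ' m with hμ | hμ'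
  · rw [(μ.consistent m w).1 (hμ ▸ hm)]
    exact min_le_left _ _
  · rw [(μ'.consistent m w).1 (hμ' ▸ hm)]
    exact min_le_right _ _

theorem IndivRational.exists_injective_isSome_worseHusband (h : mkt.IndivRational μ)
    (h' : mkt.IndivRational μ') :
    ∃ e : {w // (mkt.worseHusband μ μ' w).isSome} → {m // (mkt.betterWife μ μ' m).isSome},
      e.Injective := by
  have exists_husband (w : {w // (mkt.worseHusband μ μ' w).isSome}) :
      ∃ m : {m // (mkt.betterWife μ μ' m).isSome}, μ.mu m = some w.1 := by
    obtain ⟨m, hm⟩ := Option.isSome_iff_exists.1 (h'.isSome_nu_of_isSome_worseHusband w.2)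
    have hw := (μ.consistent m w).2 hm
    exact ⟨⟨m, h.isSome_betterWife_of_mu_eq_some hw⟩, hw⟩
  choose e he using exists_husband
  exact ⟨e, fun w₁ w₂ heq =>
    Subtype.ext <| Option.some_injective _ <| (he w₁).symm.trans (heq ▸ he w₂)⟩

theorem Stable.betterWife_eq_some_iff (hfin : Finite M ∨ Finite W) (h : mkt.Stable μ)
    (h' : mkt.Stable μ') (m : M) (w : W) :
    mkt.betterWife μ μ' m = some w ↔ mkt.worseHusband μ μ' w = some m := by
  obtain ⟨_, he⟩ := h.1.exists_injective_isSome_worseHusband h'.1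
  exact eq_some_iff_eq_some_of_injective hfin
    (fun _ _ => h.worseHusband_eq_some_of_betterWife_eq_some h') he m w

theorem IndivRational.of_eq_or_eq {σ : Matching M W} (h : mkt.IndivRational μ)
    (h' : mkt.IndivRational μ') (hmu : ∀ m, σ.mu m = μ.mu m ∨ σ.mu m = μ'.mu m)
    (hnu : ∀ w, σ.nu w = μ.nu w ∨ σ.nu w = μ'.nu w) : mkt.IndivRational σ :=
  ⟨fun m w hm => (hmu m).elim (fun heq => h.1 m w (heq ▸ hm)) fun heq => h'.1 m w (heq ▸ hm),
    fun w m hw => (hnu w).elim (fun heq => h.2 w m (heq ▸ hw)) fun heq => h'.2 w m (heq ▸ hw)⟩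

theorem Stable.of_betterWife_worseHusband {σ : Matching M W} (h : mkt.Stable μ)
    (h' : mkt.Stable μ') (hmu : ∀ m, σ.mu m = mkt.betterWife μ μ' m)
    (hnu : ∀ w, σ.nu w = mkt.worseHusband μ μ' w) : mkt.Stable σ := by
  refine ⟨h.1.of_eq_or_eq h'.1 (fun m => ?_) (fun w => ?_), ?_⟩
  · exact hmu m ▸ mkt.betterWife_eq_or μ μ' m
  · exact hnu w ▸ mkt.worseHusband_eq_or μ μ' w
  · rintro m w ⟨-, hm, hw⟩
    rw [hmu] at hm
    rw [hnu] at hw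
    exact hw.not_ge (h.wRank_some_le_worseHusband h' hm.le)

end Market

theorem meet_is_stable_matching_general {M W : Type*} (hfin : Finite M ∨ Finite W)
    (mkt : Market M W) (μ μ' : Matching M W)
    (h : mkt.Stable μ) (h' : mkt.Stable μ') :
    ∃ σ : Matching M W,
      (∀ w : W, σ.nu w =
        if mkt.wRank w (μ.nu w) ≤ mkt.wRank w (μ'.nu w) then μ.nu w else μ'.nu w) ∧
      (∀ m : M, σ.mu m =
        if mkt.mRank m (μ'.mu m) ≤ mkt.mRank m (μ.mu m) then μ.mu m else μ'.mu m) ∧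
      mkt.Stable σ := by
  let σ : Matching M W :=
    ⟨mkt.betterWife μ μ', mkt.worseHusband μ μ', h.betterWife_eq_some_iff hfin h'⟩
  have σ_stable : mkt.Stable σ :=
    h.of_betterWife_worseHusband h' (fun _ => rfl) (fun _ => rfl)
  exact ⟨σ, fun _ => rfl, fun _ => rfl, σ_stable⟩

/-- for stable `μ, μ'`, the assignment giving each woman the
less preferred of `μ(w)` and `μ'(w)` is a well-defined matching (each man
receiving the more preferred of `μ(m)` and `μ'(m)`), and it is stable. -/
theorem meet_is_stable_matching {M W : Type*} [Fintype M] [Fintype W]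
    (mkt : Market M W) (μ μ' : Matching M W)
    (h : mkt.Stable μ) (h' : mkt.Stable μ') :
    ∃ σ : Matching M W,
      (∀ w : W, σ.nu w =
        if mkt.wRank w (μ.nu w) ≤ mkt.wRank w (μ'.nu w) then μ.nu w else μ'.nu w) ∧
      (∀ m : M, σ.mu m =
        if mkt.mRank m (μ'.mu m) ≤ mkt.mRank m (μ.mu m) then μ.mu m else μ'.mu m) ∧
      mkt.Stable σ := by
  exact meet_is_stable_matching_general (.inl inferInstance) mkt μ μ' h h'
end
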